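/- arXiv:2101.07157 — 2 statements merged into one kernel-verified Lean document; each statement's English description precedes it below -/
import Mathlib

section
/- Suppose F is ε-approximately k-submodular with respect to f. Let x and o' be k-states with x ⪯ o', let e, u ∈ V be distinct with x e = x u = 0 and o' e = o' u = 0, and let i, i' ∈ {1,…,k} with i ≠ i'. Assume the greedy-choice inequalities Δ_{e,i}F(x) ≥ Δ_{u,i}F(x) and Δ_{e,i}F(x) ≥ Δ_{e,i'}F(x). Then 2·[((1+ε)/(1−ε))·f(x+(e,i)) − f(x)] ≥ f((o'+(e,i'))+(u,i)) − f((o'+(e,i))+(u,i')). (This is Case 1 of the single-step inequality used in the ε-AS analysis of k-Greedy-IS, where the greedily selected element e appears in the optimal solution in a different dimension i' and is swapped with the displaced element u.) -/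
/-!
By monotonicity `f (o' + (e,i) + (u,i')) ≥ f o'`, so the right-hand side is at most
`f (o' + (e,i') + (u,i)) - f o'`, which is a sum of two marginal gains of `f` over states
extending `x`. Diminishing returns bounds these by `Δ_{u,i} f(x)` and `Δ_{e,i'} f(x)`. The greedy
inequalities compare the values of `F` at `x + (u,i)` and `x + (e,i')` with its value at
`x + (e,i)`; the two-sided approximation turns each into a comparison of the values of `f`, losing
a factor `(1 + ε) / (1 - ε)`.
-/

/-- The support of a `k`-state: elements assigned a nonzero value. -/
def supp {V : Type*} [Fintype V] {k : ℕ} [DecidableEq V] (x : V → Fin (k+1)) : Finset V :=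
  Finset.univ.filter (fun e => x e ≠ 0)

/-- The `i`-th support of a `k`-state: elements assigned value `i`. -/
def suppi {V : Type*} [Fintype V] {k : ℕ} [DecidableEq V] (x : V → Fin (k+1)) (i : Fin (k+1)) :
    Finset V :=
  Finset.univ.filter (fun e => x e = i)

/-- The partial order on `k`-states: `y` agrees with `x` on the support of `x`. -/
def kle {V : Type*} {k : ℕ} (x y : V → Fin (k+1)) : Prop :=
  ∀ e, x e ≠ 0 → y e = x e

/-- `kadd x e i` is the `k`-state agreeing with `x` except that `e` is assigned `i`. -/
def kadd {V : Type*} [DecidableEq V] {k : ℕ} (x : V → Fin (k+1)) (e : V) (i : Fin (k+1)) :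
    V → Fin (k+1) :=
  Function.update x e i

/-- The marginal gain `Δ_{e,i} g (x) = g(x + (e,i)) - g(x)`. -/
def marg {V : Type*} [DecidableEq V] {k : ℕ} (g : (V → Fin (k+1)) → ℝ) (e : V)
    (i : Fin (k+1)) (x : V → Fin (k+1)) : ℝ :=
  g (kadd x e i) - g x

/-- `f` is monotone and satisfies the diminishing returns property (monotone k-submodular). -/
def KSubmodular {V : Type*} [Fintype V] [DecidableEq V] {k : ℕ}
    (f : (V → Fin (k+1)) → ℝ) : Prop :=
  (∀ x y : V → Fin (k+1), kle x y → f x ≤ f y) ∧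
  (∀ x y : V → Fin (k+1), kle x y → ∀ e, e ∉ supp y → ∀ i : Fin (k+1), i ≠ 0 →
    marg f e i x ≥ marg f e i y)

/-- `F` is ε-approximately k-submodular (ε-AS) with respect to `f`. -/
def EpsAS {V : Type*} [Fintype V] [DecidableEq V] {k : ℕ} (ε : ℝ)
    (F f : (V → Fin (k+1)) → ℝ) : Prop :=
  (∀ x, 0 ≤ f x) ∧ KSubmodular f ∧ f (fun _ => (0 : Fin (k+1))) = 0 ∧
  (∀ x : V → Fin (k+1), (1 - ε) * f x ≤ F x ∧ F x ≤ (1 + ε) * f x)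

/-- `F` is ε-approximately diminishing returns (ε-ADR) with respect to `f`. -/
def EpsADR {V : Type*} [Fintype V] [DecidableEq V] {k : ℕ} (ε : ℝ)
    (F f : (V → Fin (k+1)) → ℝ) : Prop :=
  (∀ x, 0 ≤ f x) ∧ KSubmodular f ∧ f (fun _ => (0 : Fin (k+1))) = 0 ∧
  (∀ x : V → Fin (k+1), ∀ e, e ∉ supp x → ∀ i : Fin (k+1), i ≠ 0 →
    (1 - ε) * marg f e i x ≤ marg F e i x ∧ marg F e i x ≤ (1 + ε) * marg f e i x)

/-- A greedy TS sequence of length `B` for `G` (run of k-Greedy-TS on `G` with budget `B`). -/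
def GreedyTS {V : Type*} [Fintype V] [DecidableEq V] {k : ℕ}
    (G : (V → Fin (k+1)) → ℝ) (B : ℕ) (x : ℕ → V → Fin (k+1))
    (es : ℕ → V) (is : ℕ → Fin (k+1)) : Prop :=
  x 0 = (fun _ => (0 : Fin (k+1))) ∧
  ∀ j, 1 ≤ j → j ≤ B →
    es j ∉ supp (x (j-1)) ∧ is j ≠ 0 ∧
    x j = kadd (x (j-1)) (es j) (is j) ∧
    (∀ e, e ∉ supp (x (j-1)) → ∀ i : Fin (k+1), i ≠ 0 →
      marg G (es j) (is j) (x (j-1)) ≥ marg G e i (x (j-1)))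

/-- A greedy IS sequence for `G` with individual budgets `Bv` (run of k-Greedy-IS on `G`). -/
def GreedyIS {V : Type*} [Fintype V] [DecidableEq V] {k : ℕ}
    (G : (V → Fin (k+1)) → ℝ) (Bv : Fin (k+1) → ℕ) (B : ℕ) (x : ℕ → V → Fin (k+1))
    (es : ℕ → V) (is : ℕ → Fin (k+1)) : Prop :=
  x 0 = (fun _ => (0 : Fin (k+1))) ∧
  ∀ j, 1 ≤ j → j ≤ B →
    es j ∉ supp (x (j-1)) ∧ is j ≠ 0 ∧
    (suppi (x (j-1)) (is j)).card < Bv (is j) ∧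
    x j = kadd (x (j-1)) (es j) (is j) ∧
    (∀ e, e ∉ supp (x (j-1)) → ∀ i : Fin (k+1), i ≠ 0 →
      (suppi (x (j-1)) i).card < Bv i →
      marg G (es j) (is j) (x (j-1)) ≥ marg G e i (x (j-1)))

theorem kle_trans {V : Type*} {k : ℕ} {x y z : V → Fin (k+1)} (hxy : kle x y) (hyz : kle y z) :
    kle x z := fun a ha => by
  have h := hxy a ha
  rw [← h]
  exact hyz a (h ▸ ha)

theorem kle_kadd {V : Type*} [DecidableEq V] {k : ℕ} {y : V → Fin (k+1)} {e : V}
    (he : y e = 0) (i : Fin (k+1)) : kle y (kadd y e i) := fun a ha => by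
  have hae : a ≠ e := fun h => ha (h ▸ he)
  simp [kadd, hae]

/-- A comparison of `F`-values transfers to `f` at the cost of the factor `(1 + ε) / (1 - ε)`. -/
theorem EpsAS.le_of_le {V : Type*} [Fintype V] [DecidableEq V] {k : ℕ} {ε : ℝ} (hε1 : ε < 1)
    {F f : (V → Fin (k+1)) → ℝ} (hAS : EpsAS ε F f) {y z : V → Fin (k+1)} (h : F y ≤ F z) :
    f y ≤ (1 + ε) / (1 - ε) * f z := by
  rw [div_mul_eq_mul_div, le_div_iff₀ (sub_pos.2 hε1), mul_comm]
  exact (hAS.2.2.2 y).1.trans (h.trans (hAS.2.2.2 z).2)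

/-- Case 1 single-step inequality in the ε-AS analysis of k-Greedy-IS. -/
theorem stmt10 {V : Type*} [Fintype V] [DecidableEq V] {k : ℕ} (hk : 1 ≤ k)
    (ε : ℝ) (hε0 : 0 < ε) (hε1 : ε < 1)
    (F f : (V → Fin (k+1)) → ℝ)
    (hAS : EpsAS ε F f)
    (x o' : V → Fin (k+1)) (hxo : kle x o')
    (e u : V) (heu : e ≠ u)
    (hxe : x e = 0) (hxu : x u = 0) (hoe : o' e = 0) (hou : o' u = 0)
    (i i' : Fin (k+1)) (hi : i ≠ 0) (hi' : i' ≠ 0) (hii : i ≠ i')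
    (h1 : marg F e i x ≥ marg F u i x) (h2 : marg F e i x ≥ marg F e i' x) :
    2 * (((1 + ε) / (1 - ε)) * f (kadd x e i) - f x) ≥
      f (kadd (kadd o' e i') u i) - f (kadd (kadd o' e i) u i') := by
  have hF1 := hAS.le_of_le hε1 (y := kadd x u i) (z := kadd x e i) (sub_le_sub_iff_right _ |>.1 h1)
  have hF2 := hAS.le_of_le hε1 (y := kadd x e i') (z := kadd x e i) (sub_le_sub_iff_right _ |>.1 h2)
  obtain ⟨-, ⟨hmono, hdr⟩, -, -⟩ := hAS
  have hzero : ∀ j, kadd o' e j u = 0 := fun j => by simp [kadd, heu.symm, hou]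
  have hm := hmono _ _ (kle_trans (kle_kadd hoe i) (kle_kadd (hzero i) i'))
  have hd1 := hdr x (kadd o' e i') (kle_trans hxo (kle_kadd hoe i')) u
    (by simp [supp, hzero]) i hi
  have hd2 := hdr x o' hxo e (by simp [supp, hoe]) i' hi'
  unfold marg at hd1 hd2
  linarith
end

section
/- Suppose F is ε-approximately k-submodular with respect to f, and let x⁽⁰⁾ = 𝟎, x⁽¹⁾, …, x⁽ᴮ⁾ be a greedy TS sequence of length B for F with 1 ≤ B ≤ |V|. Then the underlying k-submodular function satisfies f(x⁽ᴮ⁾) ≥ [(1−ε)/(2(1−ε+εB))]·f(o) for every k-state o with |supp(o)| ≤ B. (This is the intermediate f-level guarantee established in the proof of the total-size approximation theorem for ε-AS functions, before converting the bound from f to F.) -/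
lemma mem_supp {V : Type*} [Fintype V] [DecidableEq V] {k : ℕ} {x : V → Fin (k+1)} {e : V} :
    e ∈ supp x ↔ x e ≠ 0 := by
  simp [supp]

/-- A state extending `x` and supported inside `supp x` is `x`. -/
lemma eq_of_kle {V : Type*} [Fintype V] [DecidableEq V] {k : ℕ} {x o : V → Fin (k+1)}
    (h : kle x o) (hD : supp o \ supp x = ∅) : o = x := by
  funext v
  by_cases hv : x v = 0
  · by_contra hne
    have hm : v ∈ supp o \ supp x := by
      rw [Finset.mem_sdiff, mem_supp, mem_supp]
      exact ⟨fun h0 => hne (h0.trans hv.symm), fun h0 => h0 hv⟩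
    rw [hD] at hm
    simp at hm
  · exact h v hv

/-- One exchange: a state `o` extending `x` can be replaced by a state `o'` extending
`x + (a, i)`, lowering by one the bound on the elements outside the support, at the cost of at most one
marginal gain of `f` at `x`. -/
lemma exchange_step {V : Type*} [Fintype V] [DecidableEq V] {k : ℕ}
    {f : (V → Fin (k+1)) → ℝ} (hf : KSubmodular f) {x o : V → Fin (k+1)} (hxo : kle x o)
    {a : V} (ha : a ∉ supp x) {i : Fin (k+1)} (hi : i ≠ 0) {n : ℕ}
    (hn : (supp o \ supp x).card ≤ n + 1) :
    ∃ o', kle (kadd x a i) o' ∧ (supp o' \ supp (kadd x a i)).card ≤ n ∧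
      ∃ e, e ∉ supp x ∧ ∃ i', i' ≠ 0 ∧ f o ≤ f o' + marg f e i' x := by
  obtain ⟨hmono, hdr⟩ := hf
  have hxa : x a = 0 := by simpa [mem_supp] using ha
  have hxx : kle x (kadd x a i) := by
    intro v hv
    have : v ≠ a := fun h => hv (h ▸ hxa)
    simp [kadd, this]
  by_cases hD : supp o \ supp x = ∅
  · refine ⟨kadd x a i, fun _ _ => rfl, by simp, a, ha, i, hi, ?_⟩
    rw [eq_of_kle hxo hD]
    have := hmono _ _ hxx
    simp only [marg]
    linarith
  · -- remove `a` itself whenever `o` already assigns it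
    obtain ⟨e, he, hea⟩ : ∃ e ∈ supp o \ supp x, a ∈ supp o \ supp x → e = a := by
      by_cases haD : a ∈ supp o \ supp x
      · exact ⟨a, haD, fun _ => rfl⟩
      · obtain ⟨e, he⟩ := Finset.nonempty_iff_ne_empty.mpr hD
        exact ⟨e, he, fun h => absurd h haD⟩
    have he' := he
    rw [Finset.mem_sdiff, mem_supp, mem_supp, not_not] at he'
    obtain ⟨hoe, hxe⟩ := he'
    have hoa : e ≠ a → o a = 0 := by
      intro hne
      by_contra h0
      exact hne (hea (by rw [Finset.mem_sdiff, mem_supp]; exact ⟨h0, ha⟩))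
    have hox : kle x (Function.update o e 0) := by
      intro v hv
      have : v ≠ e := fun h => hv (h ▸ hxe)
      simpa [this] using hxo v hv
    refine ⟨kadd (Function.update o e 0) a i, ?_, ?_, e, by simpa [mem_supp] using hxe,
      o e, hoe, ?_⟩
    · intro v hv
      by_cases hva : v = a
      · subst hva; simp [kadd]
      · simp only [kadd, Function.update_of_ne hva] at hv ⊢
        exact hox v hv
    · have hsub : supp (kadd (Function.update o e 0) a i) \ supp (kadd x a i) ⊆
          (supp o \ supp x).erase e := by
        intro v hv
        rw [Finset.mem_sdiff, mem_supp, mem_supp] at hv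
        rw [Finset.mem_erase, Finset.mem_sdiff, mem_supp, mem_supp]
        by_cases hva : v = a
        · subst hva; simp [kadd, hi] at hv
        · by_cases hve : v = e
          · subst hve; simp [kadd, hva] at hv
          · simpa [kadd, hva, hve] using hv
      have := Finset.card_le_card hsub
      rw [Finset.card_erase_of_mem he] at this
      omega
    · have h1 : f (Function.update o e 0) ≤ f (kadd (Function.update o e 0) a i) := by
        apply hmono
        intro v hv
        have : v ≠ a := by
          rintro rfl
          by_cases hev : e = v
          · subst hev; simp at hv
          · rw [Function.update_of_ne (Ne.symm hev)] at hv
            exact hv (hoa hev)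
        simp [kadd, this]
      have h2 := hdr _ _ hox e (by simp [mem_supp]) (o e) hoe
      have h3 : kadd (Function.update o e 0) e (o e) = o := by simp [kadd]
      have h4 : marg f e (o e) (Function.update o e 0) = f o - f (Function.update o e 0) := by
        rw [marg, h3]
      linarith

/-- A pair maximizing the marginal gain of `F` nearly maximizes that of `f`. -/
lemma greedy_marg_le {V : Type*} [Fintype V] [DecidableEq V] {k : ℕ} {ε : ℝ} (hε1 : ε < 1)
    {F f : (V → Fin (k+1)) → ℝ} (hAS : EpsAS ε F f) {x : V → Fin (k+1)} {a e : V}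
    {i i' : Fin (k+1)} (h : marg F a i x ≥ marg F e i' x) :
    marg f e i' x ≤ f (kadd x a i) - f x + 2 * ε / (1 - ε) * f (kadd x a i) := by
  have hs := hAS.2.2.2
  have h1 := (hs (kadd x e i')).1
  have h2 := (hs (kadd x a i)).2
  simp only [marg] at h ⊢
  have hpos : 0 < 1 - ε := by linarith
  have h3 : f (kadd x e i') ≤ (1 + ε) * f (kadd x a i) / (1 - ε) := by
    rw [le_div_iff₀ hpos]; linarith
  have h4 : (1 + ε) * f (kadd x a i) / (1 - ε)
      = f (kadd x a i) + 2 * ε / (1 - ε) * f (kadd x a i) := by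
    field_simp; ring
  linarith

/-- intermediate f-level guarantee for k-Greedy-TS on an ε-AS function `F`. -/
theorem stmt19 {V : Type*} [Fintype V] [DecidableEq V] {k : ℕ} (hk : 1 ≤ k)
    (ε : ℝ) (hε0 : 0 < ε) (hε1 : ε < 1)
    (F f : (V → Fin (k+1)) → ℝ)
    (hAS : EpsAS ε F f)
    (B : ℕ) (hB1 : 1 ≤ B) (hB : B ≤ Fintype.card V)
    (x : ℕ → V → Fin (k+1)) (es : ℕ → V) (is : ℕ → Fin (k+1))
    (hgr : GreedyTS F B x es is) :
    ∀ o : V → Fin (k+1), (supp o).card ≤ B →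
      f (x B) ≥ ((1 - ε) / (2 * (1 - ε + ε * (B : ℝ)))) * f o := by
  intro o ho
  obtain ⟨hx0, hstep⟩ := hgr
  have hpos : 0 < 1 - ε := by linarith
  set c : ℝ := 2 * ε / (1 - ε) with hc
  have hc0 : 0 ≤ c := by positivity
  have key : ∀ j n : ℕ, j + n = B → ∃ o', kle (x j) o' ∧ (supp o' \ supp (x j)).card ≤ n ∧
      f o ≤ f o' + f (x j) + c * j * f (x j) := by
    intro j
    induction j with
    | zero =>
      intro n hn
      refine ⟨o, ?_, ?_, ?_⟩
      · intro e he; simp [hx0] at he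
      · exact (Finset.card_le_card Finset.sdiff_subset).trans (by omega)
      · have := hAS.1 (x 0)
        push_cast
        linarith
    | succ j ih =>
      intro n hn
      obtain ⟨o1, hk1, hc1, hf1⟩ := ih (n + 1) (by omega)
      obtain ⟨hes, his, hxj, hmax⟩ := hstep (j + 1) (by omega) (by omega)
      rw [Nat.add_sub_cancel] at hes hxj hmax
      obtain ⟨o2, hk2, hc2, e, he, i', hi', hf2⟩ := exchange_step hAS.2.1 hk1 hes his hc1
      have hg := greedy_marg_le hε1 hAS (hmax e he i' hi')
      rw [← hxj] at hk2 hc2 hg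
      refine ⟨o2, hk2, hc2, ?_⟩
      have hm : f (x j) ≤ f (x (j + 1)) := by
        apply hAS.2.1.1
        intro v hv
        have hva : v ≠ es (j + 1) := by
          rintro rfl
          exact hes (mem_supp.mpr hv)
        rw [hxj]
        simp [kadd, hva]
      have hm' : c * j * f (x j) ≤ c * j * f (x (j + 1)) := by gcongr
      push_cast
      linarith
  obtain ⟨o', hk', hc', hf'⟩ := key B 0 (by omega)
  rw [eq_of_kle hk' (Finset.card_eq_zero.mp (by omega))] at hf'
  have hd : 0 < 2 * (1 - ε + ε * (B : ℝ)) := by positivity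
  rw [ge_iff_le, div_mul_eq_mul_div, div_le_iff₀ hd]
  calc (1 - ε) * f o ≤ (1 - ε) * (f (x B) + f (x B) + c * B * f (x B)) := by gcongr
    _ = f (x B) * (2 * (1 - ε + ε * (B : ℝ))) := by
      rw [hc]; field_simp; ring
end
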